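/- Let R be a commutative integral domain with field of fractions Q, and let W be a finite group acting faithfully on R by ring automorphisms. Assume R is free as a module over the invariant subring R^W. Then: (1) the map R ⊗_{R^W} R → ∏_{w ∈ W} R defined by f ⊗ g ↦ (w⁻¹(f)·g)_{w∈W} is injective; (2) after tensoring with Q over R (on the right factor), the induced map (R ⊗_{R^W} R) ⊗_R Q → ∏_{w ∈ W} Q is bijective. -/

import Mathlib

/-!
Both parts rest on Dedekind's theorem that the distinct characters `r ↦ w • r` of `R` are
linearly independent.

* Injectivity of `f ⊗ g ↦ (w⁻¹(f) g)_w`: write `t = ∑ bᵢ ⊗ gᵢ` in a basis `b` of `R` over `R^W`.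
  If `t` maps to zero, then `∑ᵢ bᵢ w(h gᵢ) = 0` for all `w` and all `h ∈ R`; summing over `w`
  gives `∑ᵢ Tr(h gᵢ) bᵢ = 0` with `Tr(x) = ∑ w(x) ∈ R^W`, hence `∑ w(gᵢ) w(h) = 0` for all `h`,
  and so `gᵢ = 0` by Dedekind (`dedekind_smul`).
* After extension of scalars to `Q`, injectivity persists because `Q` is flat over `R`. If the
  image were a proper subspace of `Q^W`, a nonzero linear form `∑ c_w ev_w` would vanish on it,
  which is again excluded by Dedekind.
-/

open scoped TensorProduct

set_option maxHeartbeats 1000000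
set_option synthInstance.maxHeartbeats 1000000

/-- The subring of elements of `R` fixed by every element of a subgroup `H` of `G`. -/
def fixedSubring (G : Type*) [Group G] (R : Type*) [CommRing R] [MulSemiringAction G R]
    (H : Subgroup G) : Subring R where
  carrier := {r | ∀ g ∈ H, g • r = r}
  zero_mem' := fun g _ => smul_zero g
  one_mem' := fun g _ => smul_one g
  add_mem' := fun {a b} ha hb g hg => by rw [smul_add, ha g hg, hb g hg]
  mul_mem' := fun {a b} ha hb g hg => by rw [smul_mul', ha g hg, hb g hg]
  neg_mem' := fun {a} ha g hg => by rw [smul_neg, ha g hg]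

/-- The right `R`-module structure on `R ⊗_{R^W} R` (multiplication on the right factor). -/
noncomputable def rightModule (W : Type*) [Group W] (R : Type*) [CommRing R]
    [MulSemiringAction W R] : Module R (R ⊗[↥(fixedSubring W R ⊤)] R) :=
  Module.compHom _ (Algebra.TensorProduct.includeRight :
    R →ₐ[↥(fixedSubring W R ⊤)] R ⊗[↥(fixedSubring W R ⊤)] R).toRingHom

/-- `(R ⊗_{R^W} R) ⊗_R Q`, the extension of scalars of `R ⊗_{R^W} R` along `R → Q` with
respect to the right `R`-module structure (written with `Q` as the first tensor factor). -/
noncomputable abbrev TensorWithQ (W R Q : Type*) [Group W] [CommRing R] [Field Q]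
    [Algebra R Q] [MulSemiringAction W R] : Type _ :=
  @TensorProduct R _ Q (R ⊗[↥(fixedSubring W R ⊤)] R) _ _ _ (rightModule W R)

/-- The pure tensor `q ⊗ (f ⊗ g)` in `(R ⊗_{R^W} R) ⊗_R Q`. -/
noncomputable def mkQT (W R Q : Type*) [Group W] [CommRing R] [Field Q] [Algebra R Q]
    [MulSemiringAction W R] (q : Q) (t : R ⊗[↥(fixedSubring W R ⊤)] R) :
    TensorWithQ W R Q :=
  @TensorProduct.tmul R _ Q (R ⊗[↥(fixedSubring W R ⊤)] R) _ _ _ (rightModule W R) q t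

/-- Dedekind independence of the characters `r ↦ w • r`, with values extended to a domain `A`
containing `R`. -/
lemma dedekind_smul {W R A : Type*} [Group W] [Fintype W] [CommRing R] [MulSemiringAction W R]
    [FaithfulSMul W R] [CommRing A] [IsDomain A] [Algebra R A]
    (hA : Function.Injective (algebraMap R A)) (c : W → A)
    (h : ∀ r : R, ∑ w, c w * algebraMap R A (w • r) = 0) : c = 0 := by
  let χ : W → (R →* A) := fun w =>
    (algebraMap R A : R →* A).comp (MulSemiringAction.toRingHom W R w : R →* R)
  have hχ : Function.Injective χ := fun w w' hw => by
    refine FaithfulSMul.eq_of_smul_eq_smul (α := R) fun r => hA ?_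
    exact DFunLike.congr_fun hw r
  have hli := (linearIndependent_monoidHom R A).comp χ hχ
  rw [Fintype.linearIndependent_iff] at hli
  funext w
  refine hli c ?_ w
  funext r
  simpa [χ] using h r

/-- The algebra map `R ⊗_{R^W} R → ∏_{w ∈ W} R`, `f ⊗ g ↦ (w⁻¹(f) g)_w`. -/
noncomputable def twistMap (W R : Type*) [Group W] [CommRing R] [MulSemiringAction W R] :
    (R ⊗[↥(fixedSubring W R ⊤)] R) →ₐ[↥(fixedSubring W R ⊤)] (W → R) :=
  Algebra.TensorProduct.productMap
    { toFun := fun f w => w⁻¹ • f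
      map_one' := by ext; simp
      map_mul' := fun a b => by ext; simp
      map_zero' := by ext; simp
      map_add' := fun a b => by ext; simp
      commutes' := fun s => by
        ext w
        exact s.2 w⁻¹ trivial }
    { toFun := fun g _ => g
      map_one' := rfl
      map_mul' := fun _ _ => rfl
      map_zero' := rfl
      map_add' := fun _ _ => rfl
      commutes' := fun _ => rfl }

lemma twistMap_tmul {W R : Type*} [Group W] [CommRing R] [MulSemiringAction W R] (f g : R) :
    twistMap W R (f ⊗ₜ g) = fun w => (w⁻¹ • f) * g := by
  ext w
  simp [twistMap]
  rfl

lemma twistMap_injective {W R : Type*} [Group W] [Finite W] [CommRing R] [IsDomain R]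
    [MulSemiringAction W R] [FaithfulSMul W R]
    (hfree : Module.Free ↥(fixedSubring W R ⊤) R) :
    Function.Injective (twistMap W R) := by
  have := Fintype.ofFinite W
  rw [injective_iff_map_eq_zero]
  intro t ht
  let b := Module.Free.chooseBasis ↥(fixedSubring W R ⊤) R
  obtain ⟨g, rfl⟩ := (TensorProduct.equivFinsuppOfBasisLeft (N := R) b).symm.surjective t
  have hsum : ∀ w : W, ∑ i ∈ g.support, (w⁻¹ • b i) * g i = 0 := fun w => by
    have := congr_fun ht w
    rw [TensorProduct.equivFinsuppOfBasisLeft_symm_apply, Finsupp.sum, map_sum] at this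
    simpa [twistMap_tmul] using this
  have hsum' : ∀ (w : W) (h : R), ∑ i ∈ g.support, b i * (w • (h * g i)) = 0 := fun w h => by
    have := congr_arg (fun x => w • (h * x)) (hsum w)
    simp only [mul_zero, smul_zero, Finset.mul_sum, Finset.smul_sum] at this
    rw [← this]
    refine Finset.sum_congr rfl fun i _ => ?_
    rw [mul_left_comm, smul_mul' w (w⁻¹ • b i), smul_inv_smul]
  let tr : R → ↥(fixedSubring W R ⊤) := fun x => ⟨∑ w : W, w • x, fun v _ => by
    rw [Finset.smul_sum]
    simp_rw [smul_smul]
    exact Equiv.sum_comp (Equiv.mulLeft v) (fun w => w • x)⟩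
  have htr : ∀ h : R, ∀ i ∈ g.support, tr (h * g i) = 0 := fun h => by
    refine linearIndependent_iff'.1 b.linearIndependent g.support (fun i => tr (h * g i)) ?_
    have : ∀ i, tr (h * g i) • b i = ∑ w : W, b i * (w • (h * g i)) := fun i => by
      rw [← Finset.mul_sum, mul_comm (b i)]
      rfl
    simp_rw [this]
    rw [Finset.sum_comm]
    exact Finset.sum_eq_zero fun w _ => hsum' w h
  have hg : g = 0 := by
    rw [← Finsupp.support_eq_empty, Finset.eq_empty_iff_forall_notMem]
    intro i hi
    have := dedekind_smul (W := W) (R := R) (A := R) Function.injective_id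
      (fun w => w • g i) fun r => by
        have := congr_arg Subtype.val (htr r i hi)
        simpa [tr, mul_comm] using this
    exact Finsupp.mem_support_iff.1 hi (by simpa using congr_fun this 1)
  rw [hg, map_zero]

/-- An injective `R`-linear map `T → R^W` whose image is killed by no nonzero linear form on `Q^W`
becomes an isomorphism after extension of scalars to `Q = Frac R`. -/
lemma exists_extension_equiv {W R Q T : Type*} [Finite W] [CommRing R] [IsDomain R]
    [Field Q] [Algebra R Q] [IsFractionRing R Q] [AddCommGroup T] [Module R T]
    (Φ : T →ₗ[R] (W → R)) (hΦ : Function.Injective Φ)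
    (hdual : ∀ (_ : Fintype W) (c : W → Q),
      (∀ t, ∑ w, c w * algebraMap R Q (Φ t w) = 0) → c = 0) :
    ∃ e : Q ⊗[R] T ≃ₗ[R] (W → Q),
      ∀ q t, e (q ⊗ₜ t) = fun w => algebraMap R Q (Φ t w) * q := by
  classical
  have := Fintype.ofFinite W
  have : Module.Flat R Q := IsLocalization.flat Q (nonZeroDivisors R)
  let E : Q ⊗[R] T →ₗ[Q] (W → Q) :=
    (TensorProduct.piScalarRight R Q Q W).toLinearMap ∘ₗ Φ.baseChange Q
  have hE : ∀ q t, E (q ⊗ₜ t) = fun w => algebraMap R Q (Φ t w) * q := fun q t => by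
    ext w
    simp [E, Algebra.smul_def]
  have hinj : Function.Injective E :=
    (TensorProduct.piScalarRight R Q Q W).injective.comp
      (Module.Flat.lTensor_preserves_injective_linearMap Φ hΦ)
  have hsurj : Function.Surjective E := by
    rw [← LinearMap.range_eq_top]
    by_contra hne
    obtain ⟨f, hf0, hf⟩ := Submodule.exists_le_ker_of_lt_top _ (lt_top_iff_ne_top.2 hne)
    have hfw : ∀ x : W → Q, f x = ∑ w, f (Pi.single w 1) * x w := fun x => by
      rw [LinearMap.pi_apply_eq_sum_univ f x]
      refine Finset.sum_congr rfl fun w _ => ?_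
      rw [smul_eq_mul, mul_comm]
      congr 2
      ext v
      simp [Pi.single_apply, eq_comm]
    have hc := hdual inferInstance (fun w => f (Pi.single w 1)) fun t => by
      have := hf (LinearMap.mem_range_self E (1 ⊗ₜ t))
      rw [LinearMap.mem_ker, hfw, hE] at this
      simpa using this
    refine hf0 (LinearMap.ext fun x => ?_)
    rw [hfw]
    exact Finset.sum_eq_zero fun w _ => by rw [congr_fun hc w]; simp
  exact ⟨(LinearEquiv.ofBijective E ⟨hinj, hsurj⟩).restrictScalars R, hE⟩

/-- Let `R` be a commutative integral domain with field of fractions `Q`, and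
`W` a finite group acting faithfully on `R` by ring automorphisms; assume `R` is free as a
module over the invariant subring `R^W`.  Then (1) the map
`R ⊗_{R^W} R → ∏_{w ∈ W} R`, `f ⊗ g ↦ (w⁻¹(f)·g)_w`, is injective, and (2) after tensoring
with `Q` over `R` on the right factor, the induced map `(R ⊗_{R^W} R) ⊗_R Q → ∏_{w ∈ W} Q`
is bijective. -/
theorem stmt_4 (W R Q : Type*) [Group W] [Finite W] [CommRing R] [IsDomain R]
    [Field Q] [Algebra R Q] [IsFractionRing R Q] [MulSemiringAction W R]
    [FaithfulSMul W R] (hfree : Module.Free ↥(fixedSubring W R ⊤) R) :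
    (∃ φ : (R ⊗[↥(fixedSubring W R ⊤)] R) →ₗ[↥(fixedSubring W R ⊤)] (W → R),
      (∀ f g : R, φ (f ⊗ₜ g) = fun w => (w⁻¹ • f) * g) ∧ Function.Injective φ) ∧
    (∃ e : TensorWithQ W R Q ≃ₗ[R] (W → Q),
      ∀ (f g : R) (q : Q),
        e (mkQT W R Q q (f ⊗ₜ g)) = fun w => algebraMap R Q ((w⁻¹ • f) * g) * q) := by
  refine ⟨⟨(twistMap W R).toLinearMap, twistMap_tmul, twistMap_injective hfree⟩, ?_⟩
  -- Linearity for the right `R`-module structure, which is not the default one on the tensor.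
  let Φ := @LinearMap.mk R R _ _ (RingHom.id R) (R ⊗[↥(fixedSubring W R ⊤)] R) (W → R) _ _
    (rightModule W R) _ (twistMap W R).toAddMonoidHom.toAddHom (fun r t => by
      change twistMap W R ((1 ⊗ₜ r) * t) = r • twistMap W R t
      rw [map_mul, twistMap_tmul]
      ext w
      simp)
  have hΦ : ∀ (f g : R), Φ (f ⊗ₜ g) = fun w => (w⁻¹ • f) * g := twistMap_tmul
  obtain ⟨e, he⟩ := @exists_extension_equiv W R Q (R ⊗[↥(fixedSubring W R ⊤)] R) _ _ _ _ _ _ _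
    (rightModule W R) Φ (twistMap_injective hfree) (fun _ c hc => by
      -- The coordinate at `w` involves `w⁻¹`, so Dedekind applies to `w ↦ c w⁻¹`.
      have := dedekind_smul (W := W) (IsFractionRing.injective R Q) (fun w => c w⁻¹) fun r => by
        have h1 := hc (r ⊗ₜ 1)
        simp only [hΦ, mul_one] at h1
        rw [← h1]
        exact Fintype.sum_equiv (Equiv.inv W) _ _ fun w => by simp
      funext w
      simpa using congr_fun this w⁻¹)
  refine ⟨e, fun f g q => ?_⟩
  refine (he q (f ⊗ₜ g)).trans ?_
  rw [hΦ]
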